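/- Let N ≥ 1 and p₁, p₂, q₁, q₂ ≥ 0. Assume there exist α ≥ 1 and β ≥ 1 such that 1 + (p₁ − 1)/α + p₂/β > 1 + 2/N and 1 + q₁/α + (q₂ − 1)/β > 1 + 2/N. Then there exist nonnegative measurable functions u₀, v₀ on ℝ^N, not both identically zero, such that the strongly coupled system (SC) possesses a global-in-time solution (u,v) on ℝ^N × (0,∞) with u(x,t) > 0 and v(x,t) > 0 for a.e. x ∈ ℝ^N and all t > 0. -/

import Mathlib

open MeasureTheory ENNReal Filter

noncomputable section

/-- Euclidean space `ℝ^N`. -/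
abbrev Euc (N : ℕ) := EuclideanSpace ℝ (Fin N)

/-- The heat semigroup applied to a (nonnegative) function `φ` on `ℝ^N`, with values in `[0,∞]`:
`[S(t)φ](x) = ∫ (4πt)^{-N/2} exp(-|x-y|²/(4t)) φ(y) dy`. -/
noncomputable def heatS (N : ℕ) (t : ℝ) (φ : Euc N → ℝ) (x : Euc N) : ℝ≥0∞ :=
  ∫⁻ y, ENNReal.ofReal
    ((4 * Real.pi * t) ^ (-(N : ℝ) / 2) * Real.exp (-‖x - y‖ ^ 2 / (4 * t)) * φ y)

/-- The `L^∞` norm of `S(t)φ` on `ℝ^N`. -/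
noncomputable def heatSup (N : ℕ) (t : ℝ) (φ : Euc N → ℝ) : ℝ≥0∞ :=
  essSup (heatS N t φ) volume

/-- The `L^{r,∞}(E)` quasinorm: for `1 < r < ∞` it is
`sup_{λ>0} λ |{x ∈ E : |f x| > λ}|^{1/r}`; for `r = 1` (resp. `r = ∞`)
it is the usual `L¹(E)` (resp. `L^∞(E)`) norm. -/
noncomputable def wnorm (N : ℕ) (r : ℝ≥0∞) (f : Euc N → ℝ) (E : Set (Euc N)) : ℝ≥0∞ :=
  if r = 1 then ∫⁻ x in E, ENNReal.ofReal |f x|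
  else if r = ⊤ then essSup (fun x => ENNReal.ofReal |f x|) (volume.restrict E)
  else ⨆ (l : ℝ) (_ : 0 < l), ENNReal.ofReal l * (volume {x ∈ E | l < |f x|}) ^ (1 / r.toReal)

/-- The uniformly local quasinorm `|||f|||_{r,ρ} = sup_x ‖f‖_{L^{r,∞}(B(x,ρ))}`
(for `r = ∞` it is the `L^∞(ℝ^N)` norm). -/
noncomputable def ulocNorm (N : ℕ) (r : ℝ≥0∞) (ρ : ℝ) (f : Euc N → ℝ) : ℝ≥0∞ :=
  if r = ⊤ then essSup (fun x => ENNReal.ofReal |f x|) volume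
  else ⨆ x : Euc N, wnorm N r f (Metric.ball x ρ)

/-- `u ∈ L^∞(τ, T-τ; L^∞(ℝ^N))` for every `τ ∈ (0, T/2)`. -/
def LocBdd (N : ℕ) (T : ℝ≥0∞) (u : Euc N → ℝ → ℝ) : Prop :=
  ∀ τ : ℝ, 0 < τ → ENNReal.ofReal (2 * τ) < T →
    ∃ M : ℝ, ∀ t : ℝ, τ ≤ t → ENNReal.ofReal (t + τ) ≤ T →
      ∀ᵐ x ∂(volume : Measure (Euc N)), |u x t| ≤ M

/-- Regularity requirements on a pair `(u,v)`: nonnegativity, joint measurability and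
uniform boundedness away from `t = 0` and `t = T`. -/
def PairRegular (N : ℕ) (T : ℝ≥0∞) (u v : Euc N → ℝ → ℝ) : Prop :=
  (∀ x t, 0 ≤ u x t) ∧ (∀ x t, 0 ≤ v x t) ∧
  Measurable (Function.uncurry u) ∧ Measurable (Function.uncurry v) ∧
  LocBdd N T u ∧ LocBdd N T v

/-- The Duhamel identities for the system (S) `∂ₜu = Δu + v^p`, `∂ₜv = Δv + u^q` at time `t`. -/
def DuhamelSys (N : ℕ) (p q : ℝ) (u₀ v₀ : Euc N → ℝ) (u v : Euc N → ℝ → ℝ) (t : ℝ) : Prop :=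
  (∀ᵐ x ∂(volume : Measure (Euc N)), ENNReal.ofReal (u x t) =
      heatS N t u₀ x + ∫⁻ s in Set.Ioo 0 t, heatS N (t - s) (fun y => v y s ^ p) x) ∧
  (∀ᵐ x ∂(volume : Measure (Euc N)), ENNReal.ofReal (v x t) =
      heatS N t v₀ x + ∫⁻ s in Set.Ioo 0 t, heatS N (t - s) (fun y => u y s ^ q) x)

/-- The Duhamel inequalities (`≥`, with finite left-hand side) for the system (S) at time `t`. -/
def DuhamelSuperSys (N : ℕ) (p q : ℝ) (u₀ v₀ : Euc N → ℝ) (u v : Euc N → ℝ → ℝ) (t : ℝ) : Prop :=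
  (∀ᵐ x ∂(volume : Measure (Euc N)),
      heatS N t u₀ x + (∫⁻ s in Set.Ioo 0 t, heatS N (t - s) (fun y => v y s ^ p) x) ≤
        ENNReal.ofReal (u x t)) ∧
  (∀ᵐ x ∂(volume : Measure (Euc N)),
      heatS N t v₀ x + (∫⁻ s in Set.Ioo 0 t, heatS N (t - s) (fun y => u y s ^ q) x) ≤
        ENNReal.ofReal (v x t))

/-- `(u,v)` is a solution of the system (S) on `ℝ^N × (0,T)`. -/
def IsSolSys (N : ℕ) (p q : ℝ) (u₀ v₀ : Euc N → ℝ) (T : ℝ≥0∞) (u v : Euc N → ℝ → ℝ) : Prop :=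
  PairRegular N T u v ∧
  ∀ t : ℝ, 0 < t → ENNReal.ofReal t < T → DuhamelSys N p q u₀ v₀ u v t

/-- `(u,v)` is a supersolution of the system (S) on `ℝ^N × (0,T)`. -/
def IsSuperSys (N : ℕ) (p q : ℝ) (u₀ v₀ : Euc N → ℝ) (T : ℝ≥0∞) (u v : Euc N → ℝ → ℝ) : Prop :=
  PairRegular N T u v ∧
  ∀ t : ℝ, 0 < t → ENNReal.ofReal t < T → DuhamelSuperSys N p q u₀ v₀ u v t

/-- `(u,v)` is the minimal solution of the system (S) on `ℝ^N × (0,T)`. -/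
def IsMinSolSys (N : ℕ) (p q : ℝ) (u₀ v₀ : Euc N → ℝ) (T : ℝ≥0∞)
    (u v : Euc N → ℝ → ℝ) : Prop :=
  IsSolSys N p q u₀ v₀ T u v ∧
  ∀ u' v' : Euc N → ℝ → ℝ, IsSolSys N p q u₀ v₀ T u' v' →
    ∀ t : ℝ, 0 < t → ENNReal.ofReal t < T →
      (∀ᵐ x ∂(volume : Measure (Euc N)), u x t ≤ u' x t) ∧
      (∀ᵐ x ∂(volume : Measure (Euc N)), v x t ≤ v' x t)

/-- Regularity requirements on a scalar function `w`. -/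
def ScalarRegular (N : ℕ) (T : ℝ≥0∞) (w : Euc N → ℝ → ℝ) : Prop :=
  (∀ x t, 0 ≤ w x t) ∧ Measurable (Function.uncurry w) ∧ LocBdd N T w

/-- The Duhamel identity for the scalar problem (E) `∂ₜw = Δw + α w^A + β w^B` at time `t`. -/
def DuhamelScalar (N : ℕ) (α β A B : ℝ) (w₀ : Euc N → ℝ) (w : Euc N → ℝ → ℝ) (t : ℝ) : Prop :=
  ∀ᵐ x ∂(volume : Measure (Euc N)), ENNReal.ofReal (w x t) =
    heatS N t w₀ x +
      ∫⁻ s in Set.Ioo 0 t, heatS N (t - s) (fun y => α * w y s ^ A + β * w y s ^ B) x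

/-- The Duhamel inequality (`≥`, with finite left-hand side) for the scalar problem (E). -/
def DuhamelSuperScalar (N : ℕ) (α β A B : ℝ) (w₀ : Euc N → ℝ) (w : Euc N → ℝ → ℝ)
    (t : ℝ) : Prop :=
  ∀ᵐ x ∂(volume : Measure (Euc N)),
    heatS N t w₀ x +
        (∫⁻ s in Set.Ioo 0 t, heatS N (t - s) (fun y => α * w y s ^ A + β * w y s ^ B) x) ≤
      ENNReal.ofReal (w x t)

/-- `w` is a solution of the scalar problem (E) on `ℝ^N × (0,T)`. -/
def IsSolScalar (N : ℕ) (α β A B : ℝ) (w₀ : Euc N → ℝ) (T : ℝ≥0∞)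
    (w : Euc N → ℝ → ℝ) : Prop :=
  ScalarRegular N T w ∧
  ∀ t : ℝ, 0 < t → ENNReal.ofReal t < T → DuhamelScalar N α β A B w₀ w t

/-- `w` is a supersolution of the scalar problem (E) on `ℝ^N × (0,T)`. -/
def IsSuperScalar (N : ℕ) (α β A B : ℝ) (w₀ : Euc N → ℝ) (T : ℝ≥0∞)
    (w : Euc N → ℝ → ℝ) : Prop :=
  ScalarRegular N T w ∧
  ∀ t : ℝ, 0 < t → ENNReal.ofReal t < T → DuhamelSuperScalar N α β A B w₀ w t

/-- The Duhamel identities for the strongly coupled system (SC)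
`∂ₜu = Δu + u^{p₁} v^{p₂}`, `∂ₜv = Δv + u^{q₁} v^{q₂}` at time `t`. -/
def DuhamelSC (N : ℕ) (p₁ p₂ q₁ q₂ : ℝ) (u₀ v₀ : Euc N → ℝ) (u v : Euc N → ℝ → ℝ)
    (t : ℝ) : Prop :=
  (∀ᵐ x ∂(volume : Measure (Euc N)), ENNReal.ofReal (u x t) =
      heatS N t u₀ x +
        ∫⁻ s in Set.Ioo 0 t, heatS N (t - s) (fun y => u y s ^ p₁ * v y s ^ p₂) x) ∧
  (∀ᵐ x ∂(volume : Measure (Euc N)), ENNReal.ofReal (v x t) =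
      heatS N t v₀ x +
        ∫⁻ s in Set.Ioo 0 t, heatS N (t - s) (fun y => u y s ^ q₁ * v y s ^ q₂) x)

/-- `(u,v)` is a solution of the strongly coupled system (SC) on `ℝ^N × (0,T)`. -/
def IsSolSC (N : ℕ) (p₁ p₂ q₁ q₂ : ℝ) (u₀ v₀ : Euc N → ℝ) (T : ℝ≥0∞)
    (u v : Euc N → ℝ → ℝ) : Prop :=
  PairRegular N T u v ∧
  ∀ t : ℝ, 0 < t → ENNReal.ofReal t < T → DuhamelSC N p₁ p₂ q₁ q₂ u₀ v₀ u v t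

/-!
If `w` solves the heat equation then, by Jensen's inequality for the concave power `θ ≤ 1`,
`S(t - s) (w(s)^θ) ≤ w(t)^θ`. With `u = w^(1/α)` and `v = w^(1/β)` the sources factor as
`u^p₁ v^p₂ = w^e₁ u` and `u^q₁ v^q₂ = w^e₂ v`, where `e₁ = (p₁ - 1)/α + p₂/β` and
`e₂ = q₁/α + (q₂ - 1)/β`, so their Duhamel terms are at most `(∫₀^∞ ‖w(s)‖_∞^eᵢ ds)` times `u(t)`
and `v(t)`. For a small multiple of the heat kernel, `‖w(s)‖_∞ ≤ δ (1 + s)^(-N/2)`, and these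
integrals are finite and small because `eᵢ > 2/N`. Hence `(u, v)` is a global supersolution for the
data `(u(0)/2, v(0)/2)`, and monotone iteration from zero converges to a solution below it.
-/

section HeatKernel

variable {N : ℕ}

/-- The Gauss–Weierstrass kernel `(4πt)^{-N/2} exp(-|x|²/(4t))`, meaningful for `t > 0`. -/
def heatKernel (N : ℕ) (t : ℝ) (x : Euc N) : ℝ :=
  (4 * Real.pi * t) ^ (-(N : ℝ) / 2) * Real.exp (-‖x‖ ^ 2 / (4 * t))

lemma heatKernel_pos {t : ℝ} (ht : 0 < t) (x : Euc N) : 0 < heatKernel N t x := by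
  unfold heatKernel; positivity

lemma heatKernel_le_rpow {t : ℝ} (ht : 0 < t) (x : Euc N) :
    heatKernel N t x ≤ t ^ (-(N : ℝ) / 2) := by
  have hexp : Real.exp (-‖x‖ ^ 2 / (4 * t)) ≤ 1 :=
    Real.exp_le_one_iff.2 (div_nonpos_of_nonpos_of_nonneg (by simp) (by positivity))
  have hbase : t ≤ 4 * Real.pi * t := le_mul_of_one_le_left ht.le (by linarith [Real.pi_gt_three])
  calc heatKernel N t x ≤ (4 * Real.pi * t) ^ (-(N : ℝ) / 2) :=
        mul_le_of_le_one_right (by positivity) hexp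
    _ ≤ t ^ (-(N : ℝ) / 2) := Real.rpow_le_rpow_of_nonpos ht hbase
        (div_nonpos_of_nonpos_of_nonneg (by simp) zero_le_two)

@[fun_prop]
lemma measurable_heatKernel {X : Type*} [MeasurableSpace X] {τ : X → ℝ} {ξ : X → Euc N}
    (hτ : Measurable τ) (hξ : Measurable ξ) : Measurable fun a => heatKernel N (τ a) (ξ a) := by
  unfold heatKernel; fun_prop

lemma integral_heatKernel {t : ℝ} (ht : 0 < t) : ∫ x, heatKernel N t x = 1 := by
  have hgauss : ∫ x : Euc N, Real.exp (-‖x‖ ^ 2 / (4 * t)) = (4 * Real.pi * t) ^ ((N : ℝ) / 2) := by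
    convert GaussianFourier.integral_rexp_neg_mul_sq_norm (V := Euc N)
      (show 0 < (4 * t)⁻¹ by positivity) using 3
    · ring_nf
    · field_simp
    · simp
  simp only [heatKernel]
  rw [integral_const_mul, hgauss, neg_div, Real.rpow_neg (by positivity)]
  exact inv_mul_cancel₀ (by positivity)

lemma lintegral_heatKernel {t : ℝ} (ht : 0 < t) :
    ∫⁻ x, ENNReal.ofReal (heatKernel N t x) = 1 := by
  have hint : Integrable (heatKernel N t) :=
    Integrable.of_integral_ne_zero (by rw [integral_heatKernel ht]; exact one_ne_zero)
  rw [← ofReal_integral_eq_lintegral_ofReal hint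
    (Eventually.of_forall fun x => (heatKernel_pos ht x).le), integral_heatKernel ht,
    ENNReal.ofReal_one]

-- Completing the square in `y`.
lemma heatKernel_sub_mul_heatKernel {r t : ℝ} (hr : 0 < r) (ht : 0 < t) (x y : Euc N) :
    heatKernel N t (x - y) * heatKernel N r y =
      heatKernel N (r + t) x * heatKernel N (r * t / (r + t)) (y - (r / (r + t)) • x) := by
  have hprefactor : (4 * Real.pi * t) ^ (-(N : ℝ) / 2) * (4 * Real.pi * r) ^ (-(N : ℝ) / 2) =
      (4 * Real.pi * (r + t)) ^ (-(N : ℝ) / 2) *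
        (4 * Real.pi * (r * t / (r + t))) ^ (-(N : ℝ) / 2) := by
    rw [← Real.mul_rpow (by positivity) (by positivity),
      ← Real.mul_rpow (by positivity) (by positivity)]
    congr 1
    field_simp
  have hexponent : -‖x - y‖ ^ 2 / (4 * t) + -‖y‖ ^ 2 / (4 * r) = -‖x‖ ^ 2 / (4 * (r + t)) +
      -‖y - (r / (r + t)) • x‖ ^ 2 / (4 * (r * t / (r + t))) := by
    rw [norm_sub_sq_real, norm_sub_sq_real, inner_smul_right, norm_smul, real_inner_comm,
      Real.norm_of_nonneg (by positivity)]
    field_simp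
    ring
  simp only [heatKernel]
  rw [mul_mul_mul_comm, hprefactor, ← Real.exp_add, hexponent, Real.exp_add, mul_mul_mul_comm]

end HeatKernel

section HeatFlow

variable {N : ℕ}

/-- The heat semigroup acting on `[0,∞]`-valued functions, so that monotone limits stay in
its domain. -/
def heatFlow (N : ℕ) (t : ℝ) (F : Euc N → ℝ≥0∞) (x : Euc N) : ℝ≥0∞ :=
  ∫⁻ y, ENNReal.ofReal (heatKernel N t (x - y)) * F y

lemma heatS_eq_heatFlow {t : ℝ} (ht : 0 < t) (φ : Euc N → ℝ) (x : Euc N) :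
    heatS N t φ x = heatFlow N t (fun y => ENNReal.ofReal (φ y)) x :=
  lintegral_congr fun y => ENNReal.ofReal_mul (heatKernel_pos ht (x - y)).le

lemma heatFlow_mono_ae {F G : Euc N → ℝ≥0∞} (h : F ≤ᵐ[volume] G) (t : ℝ) (x : Euc N) :
    heatFlow N t F x ≤ heatFlow N t G x :=
  lintegral_mono_ae (h.mono fun _ hy => by gcongr)

lemma measurable_heatFlow {X : Type*} [MeasurableSpace X] {τ : X → ℝ} {ξ : X → Euc N}
    {F : X → Euc N → ℝ≥0∞} (hτ : Measurable τ) (hξ : Measurable ξ)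
    (hF : Measurable (Function.uncurry F)) :
    Measurable fun a => heatFlow N (τ a) (F a) (ξ a) := by
  have hintegrand : Measurable fun w : X × Euc N =>
      ENNReal.ofReal (heatKernel N (τ w.1) (ξ w.1 - w.2)) * Function.uncurry F w := by fun_prop
  exact hintegrand.lintegral_prod_right'

lemma heatFlow_iSup {F : ℕ → Euc N → ℝ≥0∞} (hmono : Monotone F) (hF : ∀ n, Measurable (F n))
    (t : ℝ) (x : Euc N) : heatFlow N t (⨆ n, F n) x = ⨆ n, heatFlow N t (F n) x := by
  simp only [heatFlow, iSup_apply, ENNReal.mul_iSup]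
  refine lintegral_iSup (fun n => ?_) fun i j hij y => ?_
  · have := hF n
    fun_prop
  · exact mul_le_mul_right (hmono hij y) _

lemma heatS_mono {t : ℝ} (ht : 0 < t) {φ ψ : Euc N → ℝ} (h : φ ≤ ψ) (x : Euc N) :
    heatS N t φ x ≤ heatS N t ψ x := by
  rw [heatS_eq_heatFlow ht, heatS_eq_heatFlow ht]
  exact heatFlow_mono_ae (Eventually.of_forall fun y => ENNReal.ofReal_le_ofReal (h y)) t x

lemma heatS_const_mul {c : ℝ} (hc : 0 ≤ c) (t : ℝ) (φ : Euc N → ℝ) (x : Euc N) :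
    heatS N t (fun y => c * φ y) x = ENNReal.ofReal c * heatS N t φ x := by
  simp only [heatS, mul_left_comm _ c, ENNReal.ofReal_mul hc]
  exact lintegral_const_mul' _ _ ENNReal.ofReal_ne_top

lemma heatS_pos {t : ℝ} (ht : 0 < t) {φ : Euc N → ℝ} (hφ : Measurable φ)
    (hφ0 : ¬ φ ≤ᵐ[volume] 0) (x : Euc N) : 0 < heatS N t φ x := by
  refine pos_iff_ne_zero.2 fun hzero => hφ0 ?_
  rw [heatS, lintegral_eq_zero_iff (by fun_prop)] at hzero
  filter_upwards [hzero] with y hy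
  exact nonpos_of_mul_nonpos_right (ENNReal.ofReal_eq_zero.1 hy) (heatKernel_pos ht (x - y))

lemma heatS_heatKernel {r t : ℝ} (hr : 0 < r) (ht : 0 < t) (x : Euc N) :
    heatS N t (heatKernel N r) x = ENNReal.ofReal (heatKernel N (r + t) x) := by
  have hrt : 0 < r * t / (r + t) := by positivity
  calc heatS N t (heatKernel N r) x
      = ∫⁻ y, ENNReal.ofReal (heatKernel N (r + t) x) *
          ENNReal.ofReal (heatKernel N (r * t / (r + t)) (y - (r / (r + t)) • x)) := by
        refine lintegral_congr fun y => ?_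
        rw [← ENNReal.ofReal_mul (heatKernel_pos (by positivity) x).le,
          ← heatKernel_sub_mul_heatKernel hr ht]
        rfl
    _ = ENNReal.ofReal (heatKernel N (r + t) x) := by
        rw [lintegral_const_mul' _ _ ENNReal.ofReal_ne_top,
          lintegral_sub_right_eq_self fun y => ENNReal.ofReal (heatKernel N (r * t / (r + t)) y),
          lintegral_heatKernel hrt, mul_one]

-- Hölder's inequality with exponents `1/θ` and `1/(1-θ)`, since the kernel has mass one.
lemma heatFlow_rpow_le {t θ : ℝ} (ht : 0 < t) (hθ : 0 ≤ θ) (hθ1 : θ ≤ 1) {F : Euc N → ℝ≥0∞}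
    (hF : Measurable F) (x : Euc N) :
    heatFlow N t (fun y => F y ^ θ) x ≤ heatFlow N t F x ^ θ := by
  set k : Euc N → ℝ≥0∞ := fun y => ENNReal.ofReal (heatKernel N t (x - y)) with hk
  have hk_meas : Measurable k := by fun_prop
  have hk_one : ∫⁻ y, k y = 1 := by
    rw [hk, lintegral_sub_left_eq_self fun y => ENNReal.ofReal (heatKernel N t y),
      lintegral_heatKernel ht]
  calc heatFlow N t (fun y => F y ^ θ) x = ∫⁻ y, (k y * F y) ^ θ * k y ^ (1 - θ) := by
        refine lintegral_congr fun y => ?_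
        rw [ENNReal.mul_rpow_of_nonneg _ _ hθ, mul_right_comm,
          ← ENNReal.rpow_add_of_nonneg _ _ hθ (sub_nonneg.2 hθ1), add_sub_cancel,
          ENNReal.rpow_one]
    _ ≤ (∫⁻ y, k y * F y) ^ θ * (∫⁻ y, k y) ^ (1 - θ) :=
        ENNReal.lintegral_mul_norm_pow_le (hk_meas.mul hF).aemeasurable hk_meas.aemeasurable
          hθ (sub_nonneg.2 hθ1) (add_sub_cancel θ 1)
    _ = heatFlow N t F x ^ θ := by rw [hk_one, ENNReal.one_rpow, mul_one]; rfl

lemma heatS_rpow_le {t θ : ℝ} (ht : 0 < t) (hθ : 0 ≤ θ) (hθ1 : θ ≤ 1) {φ : Euc N → ℝ}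
    (hφ : Measurable φ) (hφ0 : ∀ y, 0 ≤ φ y) (x : Euc N) :
    heatS N t (fun y => φ y ^ θ) x ≤ heatS N t φ x ^ θ := by
  rw [heatS_eq_heatFlow ht, heatS_eq_heatFlow ht]
  simp only [← ENNReal.ofReal_rpow_of_nonneg (hφ0 _) hθ]
  exact heatFlow_rpow_le ht hθ hθ1 hφ.ennreal_ofReal x

end HeatFlow

section Duhamel

variable {N : ℕ}

/-- The Duhamel operator: the mild solution of `∂ₜU = ΔU + H`, `U(0) = F`, as a `[0,∞]`-valued
function on space-time. -/
def duhamel (N : ℕ) (F : Euc N → ℝ≥0∞) (H : Euc N × ℝ → ℝ≥0∞) (z : Euc N × ℝ) : ℝ≥0∞ :=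
  heatFlow N z.2 F z.1 + ∫⁻ s in Set.Ioo 0 z.2, heatFlow N (z.2 - s) (fun y => H (y, s)) z.1

lemma duhamel_mono_ae {F : Euc N → ℝ≥0∞} {H K : Euc N × ℝ → ℝ≥0∞} {t : ℝ}
    (h : ∀ s ∈ Set.Ioo 0 t, ∀ᵐ y, H (y, s) ≤ K (y, s)) (x : Euc N) :
    duhamel N F H (x, t) ≤ duhamel N F K (x, t) :=
  add_le_add_right
    (setLIntegral_mono' measurableSet_Ioo fun s hs => heatFlow_mono_ae (h s hs) (t - s) x) _

lemma duhamel_congr_ae {F : Euc N → ℝ≥0∞} {H K : Euc N × ℝ → ℝ≥0∞} {t : ℝ}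
    (h : ∀ s ∈ Set.Ioo 0 t, ∀ᵐ y, H (y, s) = K (y, s)) (x : Euc N) :
    duhamel N F H (x, t) = duhamel N F K (x, t) :=
  le_antisymm (duhamel_mono_ae (fun s hs => (h s hs).mono fun _ => le_of_eq) x)
    (duhamel_mono_ae (fun s hs => (h s hs).mono fun _ => ge_of_eq) x)

lemma duhamel_mono (F : Euc N → ℝ≥0∞) : Monotone (duhamel N F) := fun _ _ h z =>
  duhamel_mono_ae (fun s _ => Eventually.of_forall fun y => h (y, s)) z.1

lemma measurable_duhamel {F : Euc N → ℝ≥0∞} {H : Euc N × ℝ → ℝ≥0∞} (hF : Measurable F)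
    (hH : Measurable H) : Measurable (duhamel N F H) := by
  have hsource : Measurable fun w : (Euc N × ℝ) × ℝ =>
      heatFlow N (w.1.2 - w.2) (fun y => H (y, w.2)) w.1.1 :=
    measurable_heatFlow (by fun_prop) (by fun_prop) (by unfold Function.uncurry; fun_prop)
  have hdomain : MeasurableSet {w : (Euc N × ℝ) × ℝ | w.2 ∈ Set.Ioo 0 w.1.2} :=
    (measurableSet_lt measurable_const measurable_snd).inter
      (measurableSet_lt measurable_snd (by fun_prop))
  refine (measurable_heatFlow (F := fun _ => F) measurable_snd measurable_fst
    (hF.comp measurable_snd)).add ?_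
  simp only [← lintegral_indicator measurableSet_Ioo]
  exact (hsource.indicator hdomain).lintegral_prod_right'

lemma duhamel_iSup (F : Euc N → ℝ≥0∞) {H : ℕ → Euc N × ℝ → ℝ≥0∞} (hmono : Monotone H)
    (hH : ∀ n, Measurable (H n)) : duhamel N F (⨆ n, H n) = ⨆ n, duhamel N F (H n) := by
  ext z
  have hflow : ∀ s, heatFlow N (z.2 - s) (fun y => ⨆ n, H n (y, s)) z.1 =
      ⨆ n, heatFlow N (z.2 - s) (fun y => H n (y, s)) z.1 := fun s => by
    rw [← heatFlow_iSup (fun i j hij y => hmono hij (y, s))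
      fun n => (hH n).comp measurable_prodMk_right]
    congr 1
    ext y
    rw [iSup_apply]
  have hmeas : ∀ n, Measurable fun s => heatFlow N (z.2 - s) (fun y => H n (y, s)) z.1 :=
    fun n => measurable_heatFlow (by fun_prop) (by fun_prop) ((hH n).comp measurable_swap)
  simp only [duhamel, iSup_apply, hflow, ← ENNReal.add_iSup]
  rw [lintegral_iSup hmeas fun i j hij s =>
    heatFlow_mono_ae (Eventually.of_forall fun y => hmono hij (y, s)) _ _]

lemma duhamel_ofReal (f : Euc N → ℝ) (h : Euc N → ℝ → ℝ) (x : Euc N) {t : ℝ} (ht : 0 < t) :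
    duhamel N (fun y => ENNReal.ofReal (f y)) (fun z => ENNReal.ofReal (h z.1 z.2)) (x, t) =
      heatS N t f x + ∫⁻ s in Set.Ioo 0 t, heatS N (t - s) (fun y => h y s) x := by
  rw [heatS_eq_heatFlow ht, duhamel]
  congr 1
  exact setLIntegral_congr_fun measurableSet_Ioo fun s hs =>
    (heatS_eq_heatFlow (sub_pos.2 hs.2) _ x).symm

end Duhamel

section PowerSource

variable {N : ℕ} {a b : ℝ}

/-- The power source term `U^a V^b` on space-time. -/
def powerSource (a b : ℝ) (U V : Euc N × ℝ → ℝ≥0∞) (z : Euc N × ℝ) : ℝ≥0∞ :=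
  U z ^ a * V z ^ b

lemma measurable_powerSource {U V : Euc N × ℝ → ℝ≥0∞} (hU : Measurable U) (hV : Measurable V) :
    Measurable (powerSource a b U V) := by
  unfold powerSource; fun_prop

lemma powerSource_mono (ha : 0 ≤ a) (hb : 0 ≤ b) {U U' V V' : Euc N × ℝ → ℝ≥0∞}
    (hU : U ≤ U') (hV : V ≤ V') : powerSource a b U V ≤ powerSource a b U' V' := fun z =>
  mul_le_mul' (ENNReal.rpow_le_rpow (hU z) ha) (ENNReal.rpow_le_rpow (hV z) hb)

lemma iSup_rpow_const {ι : Type*} [Nonempty ι] {c : ℝ} (hc : 0 ≤ c) (g : ι → ℝ≥0∞) :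
    (⨆ i, g i) ^ c = ⨆ i, g i ^ c :=
  (ENNReal.monotone_rpow_of_nonneg hc).map_ciSup_of_continuousAt
    ENNReal.continuous_rpow_const.continuousAt

lemma iSup_mul_iSup_of_monotone {ι : Type*} [Preorder ι] [IsDirectedOrder ι] {f g : ι → ℝ≥0∞}
    (hf : Monotone f) (hg : Monotone g) : (⨆ i, f i) * ⨆ i, g i = ⨆ i, f i * g i := by
  refine le_antisymm ?_ ENNReal.iSup_mul_le
  simp only [ENNReal.iSup_mul, ENNReal.mul_iSup]
  refine iSup_le fun i => iSup_le fun j => ?_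
  obtain ⟨k, hik, hjk⟩ := exists_ge_ge i j
  exact le_iSup_of_le k (mul_le_mul' (hf hjk) (hg hik))

lemma powerSource_iSup (ha : 0 ≤ a) (hb : 0 ≤ b) {U V : ℕ → Euc N × ℝ → ℝ≥0∞}
    (hU : Monotone U) (hV : Monotone V) :
    powerSource a b (⨆ n, U n) (⨆ n, V n) = ⨆ n, powerSource a b (U n) (V n) := by
  ext z
  simp only [powerSource, iSup_apply, iSup_rpow_const ha, iSup_rpow_const hb]
  exact iSup_mul_iSup_of_monotone (fun _ _ hij => ENNReal.rpow_le_rpow (hU hij z) ha)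
    fun _ _ hij => ENNReal.rpow_le_rpow (hV hij z) hb

lemma duhamel_powerSource_of_ae_eq (ha : 0 ≤ a) (hb : 0 ≤ b) {U V : Euc N × ℝ → ℝ≥0∞}
    {u v : Euc N → ℝ → ℝ} (hu : ∀ x t, 0 ≤ u x t) (hv : ∀ x t, 0 ≤ v x t) {t : ℝ} (ht : 0 < t)
    (hUV : ∀ s ∈ Set.Ioo 0 t, ∀ᵐ y,
      U (y, s) = ENNReal.ofReal (u y s) ∧ V (y, s) = ENNReal.ofReal (v y s))
    (f : Euc N → ℝ) (x : Euc N) :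
    duhamel N (fun y => ENNReal.ofReal (f y)) (powerSource a b U V) (x, t) =
      heatS N t f x + ∫⁻ s in Set.Ioo 0 t, heatS N (t - s) (fun y => u y s ^ a * v y s ^ b) x := by
  rw [← duhamel_ofReal f (fun y s => u y s ^ a * v y s ^ b) x ht]
  refine duhamel_congr_ae (fun s hs => ?_) x
  filter_upwards [hUV s hs] with y ⟨hUy, hVy⟩
  rw [powerSource, hUy, hVy, ENNReal.ofReal_mul (Real.rpow_nonneg (hu y s) a),
    ENNReal.ofReal_rpow_of_nonneg (hu y s) ha, ENNReal.ofReal_rpow_of_nonneg (hv y s) hb]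

lemma duhamel_powerSource_le_of_ae_le (ha : 0 ≤ a) (hb : 0 ≤ b) {U V : Euc N × ℝ → ℝ≥0∞}
    {u v : Euc N → ℝ → ℝ} (hu : ∀ x t, 0 ≤ u x t) (hv : ∀ x t, 0 ≤ v x t) {t : ℝ} (ht : 0 < t)
    (hUV : ∀ s ∈ Set.Ioo 0 t, ∀ᵐ y,
      U (y, s) ≤ ENNReal.ofReal (u y s) ∧ V (y, s) ≤ ENNReal.ofReal (v y s))
    (f : Euc N → ℝ) (x : Euc N) :
    duhamel N (fun y => ENNReal.ofReal (f y)) (powerSource a b U V) (x, t) ≤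
      heatS N t f x + ∫⁻ s in Set.Ioo 0 t, heatS N (t - s) (fun y => u y s ^ a * v y s ^ b) x := by
  rw [← duhamel_powerSource_of_ae_eq (U := fun z => ENNReal.ofReal (u z.1 z.2))
    (V := fun z => ENNReal.ofReal (v z.1 z.2)) ha hb hu hv ht
    fun _ _ => ae_of_all _ fun _ => ⟨rfl, rfl⟩]
  refine duhamel_mono_ae (fun s hs => (hUV s hs).mono fun y hy => ?_) x
  exact mul_le_mul' (ENNReal.rpow_le_rpow hy.1 ha) (ENNReal.rpow_le_rpow hy.2 hb)

end PowerSource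

section MonotoneIteration

variable {N : ℕ} {p₁ p₂ q₁ q₂ : ℝ}

lemma isFixedPt_iSup_iterate_bot {L : Type*} [CompleteLattice L] {Φ : L → L}
    (hΦ : Φ (⨆ n, Φ^[n] ⊥) = ⨆ n, Φ (Φ^[n] ⊥)) : Function.IsFixedPt Φ (⨆ n, Φ^[n] ⊥) := by
  rw [Function.IsFixedPt, hΦ, ← sup_iSup_nat_succ fun n => Φ^[n] ⊥]
  simp only [Function.iterate_zero_apply, bot_sup_eq, Function.iterate_succ_apply']

/-- The Picard map of (SC) with data `(F, G)`, whose fixed points are the `[0,∞]`-valued mild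
solutions. -/
def picardSC (N : ℕ) (p₁ p₂ q₁ q₂ : ℝ) (F G : Euc N → ℝ≥0∞)
    (P : (Euc N × ℝ → ℝ≥0∞) × (Euc N × ℝ → ℝ≥0∞)) :
    (Euc N × ℝ → ℝ≥0∞) × (Euc N × ℝ → ℝ≥0∞) :=
  (duhamel N F (powerSource p₁ p₂ P.1 P.2), duhamel N G (powerSource q₁ q₂ P.1 P.2))

lemma monotone_picardSC (hp₁ : 0 ≤ p₁) (hp₂ : 0 ≤ p₂) (hq₁ : 0 ≤ q₁) (hq₂ : 0 ≤ q₂)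
    (F G : Euc N → ℝ≥0∞) : Monotone (picardSC N p₁ p₂ q₁ q₂ F G) := fun _ _ h =>
  ⟨duhamel_mono F (powerSource_mono hp₁ hp₂ h.1 h.2),
    duhamel_mono G (powerSource_mono hq₁ hq₂ h.1 h.2)⟩

lemma measurable_iterate_picardSC {F G : Euc N → ℝ≥0∞} (hF : Measurable F) (hG : Measurable G)
    (n : ℕ) : Measurable ((picardSC N p₁ p₂ q₁ q₂ F G)^[n] ⊥).1 ∧
      Measurable ((picardSC N p₁ p₂ q₁ q₂ F G)^[n] ⊥).2 := by
  induction n with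
  | zero => exact ⟨measurable_const, measurable_const⟩
  | succ n ih =>
    rw [Function.iterate_succ_apply']
    exact ⟨measurable_duhamel hF (measurable_powerSource ih.1 ih.2),
      measurable_duhamel hG (measurable_powerSource ih.1 ih.2)⟩

lemma picardSC_iSup (hp₁ : 0 ≤ p₁) (hp₂ : 0 ≤ p₂) (hq₁ : 0 ≤ q₁) (hq₂ : 0 ≤ q₂)
    (F G : Euc N → ℝ≥0∞) {P : ℕ → (Euc N × ℝ → ℝ≥0∞) × (Euc N × ℝ → ℝ≥0∞)} (hP : Monotone P)
    (hmeas : ∀ n, Measurable (P n).1 ∧ Measurable (P n).2) :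
    picardSC N p₁ p₂ q₁ q₂ F G (⨆ n, P n) = ⨆ n, picardSC N p₁ p₂ q₁ q₂ F G (P n) := by
  have hP1 : Monotone fun n => (P n).1 := fun _ _ hij => (hP hij).1
  have hP2 : Monotone fun n => (P n).2 := fun _ _ hij => (hP hij).2
  have hduhamel : ∀ {a b : ℝ}, 0 ≤ a → 0 ≤ b → ∀ F : Euc N → ℝ≥0∞,
      duhamel N F (powerSource a b (⨆ n, (P n).1) (⨆ n, (P n).2)) =
        ⨆ n, duhamel N F (powerSource a b (P n).1 (P n).2) := fun ha hb F => by
    rw [powerSource_iSup ha hb hP1 hP2]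
    exact duhamel_iSup F (fun _ _ hij => powerSource_mono ha hb (hP1 hij) (hP2 hij))
      fun n => measurable_powerSource (hmeas n).1 (hmeas n).2
  simp only [picardSC, Prod.fst_iSup, Prod.snd_iSup, hduhamel hp₁ hp₂, hduhamel hq₁ hq₂,
    Prod.iSup_mk]

/-- The limit of the increasing sequence of Picard iterates of (SC) started at zero. -/
def picardLimit (N : ℕ) (p₁ p₂ q₁ q₂ : ℝ) (F G : Euc N → ℝ≥0∞) :
    (Euc N × ℝ → ℝ≥0∞) × (Euc N × ℝ → ℝ≥0∞) :=
  ⨆ n, (picardSC N p₁ p₂ q₁ q₂ F G)^[n] ⊥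

lemma isFixedPt_picardLimit (hp₁ : 0 ≤ p₁) (hp₂ : 0 ≤ p₂) (hq₁ : 0 ≤ q₁) (hq₂ : 0 ≤ q₂)
    {F G : Euc N → ℝ≥0∞} (hF : Measurable F) (hG : Measurable G) :
    Function.IsFixedPt (picardSC N p₁ p₂ q₁ q₂ F G) (picardLimit N p₁ p₂ q₁ q₂ F G) :=
  isFixedPt_iSup_iterate_bot (picardSC_iSup hp₁ hp₂ hq₁ hq₂ F G
    ((monotone_picardSC hp₁ hp₂ hq₁ hq₂ F G).monotone_iterate_of_le_map bot_le)
    (measurable_iterate_picardSC hF hG))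

lemma measurable_picardLimit {F G : Euc N → ℝ≥0∞} (hF : Measurable F) (hG : Measurable G) :
    Measurable (picardLimit N p₁ p₂ q₁ q₂ F G).1 ∧
      Measurable (picardLimit N p₁ p₂ q₁ q₂ F G).2 := by
  have hiter := measurable_iterate_picardSC (p₁ := p₁) (p₂ := p₂) (q₁ := q₁) (q₂ := q₂) hF hG
  constructor
  · convert Measurable.iSup fun n => (hiter n).1
    simp only [picardLimit, Prod.fst_iSup, iSup_apply]
  · convert Measurable.iSup fun n => (hiter n).2
    simp only [picardLimit, Prod.snd_iSup, iSup_apply]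

end MonotoneIteration

section Supersolution

variable {N : ℕ} {p₁ p₂ q₁ q₂ : ℝ} {u₀ v₀ : Euc N → ℝ} {T : ℝ≥0∞} {u v : Euc N → ℝ → ℝ}

/-- The Duhamel inequalities (`≥`, with finite left-hand side) for (SC) at time `t`. -/
def DuhamelSuperSC (N : ℕ) (p₁ p₂ q₁ q₂ : ℝ) (u₀ v₀ : Euc N → ℝ) (u v : Euc N → ℝ → ℝ)
    (t : ℝ) : Prop :=
  (∀ᵐ x ∂(volume : Measure (Euc N)), heatS N t u₀ x +
      (∫⁻ s in Set.Ioo 0 t, heatS N (t - s) (fun y => u y s ^ p₁ * v y s ^ p₂) x) ≤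
        ENNReal.ofReal (u x t)) ∧
  (∀ᵐ x ∂(volume : Measure (Euc N)), heatS N t v₀ x +
      (∫⁻ s in Set.Ioo 0 t, heatS N (t - s) (fun y => u y s ^ q₁ * v y s ^ q₂) x) ≤
        ENNReal.ofReal (v x t))

/-- `(u,v)` is a supersolution of (SC) on `ℝ^N × (0,T)`. -/
def IsSuperSC (N : ℕ) (p₁ p₂ q₁ q₂ : ℝ) (u₀ v₀ : Euc N → ℝ) (T : ℝ≥0∞)
    (u v : Euc N → ℝ → ℝ) : Prop :=
  PairRegular N T u v ∧
  ∀ t : ℝ, 0 < t → ENNReal.ofReal t < T → DuhamelSuperSC N p₁ p₂ q₁ q₂ u₀ v₀ u v t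

/-- The pair `P` lies below `(u, v)` at a.e. point of each time slice in `(0,T)`. -/
def AEDominated (T : ℝ≥0∞) (P : (Euc N × ℝ → ℝ≥0∞) × (Euc N × ℝ → ℝ≥0∞))
    (u v : Euc N → ℝ → ℝ) : Prop :=
  ∀ t : ℝ, 0 < t → ENNReal.ofReal t < T → ∀ᵐ x,
    P.1 (x, t) ≤ ENNReal.ofReal (u x t) ∧ P.2 (x, t) ≤ ENNReal.ofReal (v x t)

lemma AEDominated.ae_eq_ofReal_toReal {P : (Euc N × ℝ → ℝ≥0∞) × (Euc N × ℝ → ℝ≥0∞)}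
    (hP : AEDominated T P u v) (t : ℝ) (ht : 0 < t) (htT : ENNReal.ofReal t < T) : ∀ᵐ x,
      P.1 (x, t) = ENNReal.ofReal (P.1 (x, t)).toReal ∧
        P.2 (x, t) = ENNReal.ofReal (P.2 (x, t)).toReal :=
  (hP t ht htT).mono fun _ hx =>
    ⟨(ENNReal.ofReal_toReal (ne_top_of_le_ne_top ENNReal.ofReal_ne_top hx.1)).symm,
      (ENNReal.ofReal_toReal (ne_top_of_le_ne_top ENNReal.ofReal_ne_top hx.2)).symm⟩

lemma IsSuperSC.aeDominated_picardSC (h : IsSuperSC N p₁ p₂ q₁ q₂ u₀ v₀ T u v)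
    (hp₁ : 0 ≤ p₁) (hp₂ : 0 ≤ p₂) (hq₁ : 0 ≤ q₁) (hq₂ : 0 ≤ q₂)
    {P : (Euc N × ℝ → ℝ≥0∞) × (Euc N × ℝ → ℝ≥0∞)} (hP : AEDominated T P u v) :
    AEDominated T (picardSC N p₁ p₂ q₁ q₂ (fun y => ENNReal.ofReal (u₀ y))
      (fun y => ENNReal.ofReal (v₀ y)) P) u v := fun t ht htT => by
  obtain ⟨⟨hu, hv, -⟩, hsuper⟩ := h
  filter_upwards [(hsuper t ht htT).1, (hsuper t ht htT).2] with x hux hvx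
  have hPt := fun s (hs : s ∈ Set.Ioo 0 t) =>
    hP s hs.1 ((ENNReal.ofReal_le_ofReal hs.2.le).trans_lt htT)
  exact ⟨(duhamel_powerSource_le_of_ae_le hp₁ hp₂ hu hv ht hPt u₀ x).trans hux,
    (duhamel_powerSource_le_of_ae_le hq₁ hq₂ hu hv ht hPt v₀ x).trans hvx⟩

lemma IsSuperSC.aeDominated_picardLimit (h : IsSuperSC N p₁ p₂ q₁ q₂ u₀ v₀ T u v)
    (hp₁ : 0 ≤ p₁) (hp₂ : 0 ≤ p₂) (hq₁ : 0 ≤ q₁) (hq₂ : 0 ≤ q₂) :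
    AEDominated T (picardLimit N p₁ p₂ q₁ q₂ (fun y => ENNReal.ofReal (u₀ y))
      (fun y => ENNReal.ofReal (v₀ y))) u v := by
  have hiterate : ∀ n, AEDominated T ((picardSC N p₁ p₂ q₁ q₂ (fun y => ENNReal.ofReal (u₀ y))
      (fun y => ENNReal.ofReal (v₀ y)))^[n] ⊥) u v := fun n => by
    induction n with
    | zero => exact fun t _ _ => ae_of_all _ fun x => ⟨bot_le, bot_le⟩
    | succ n ih =>
      rw [Function.iterate_succ_apply']
      exact h.aeDominated_picardSC hp₁ hp₂ hq₁ hq₂ ih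
  intro t ht htT
  filter_upwards [ae_all_iff.2 fun n => hiterate n t ht htT] with x hx
  simp only [picardLimit, Prod.fst_iSup, Prod.snd_iSup, iSup_apply]
  exact ⟨iSup_le fun n => (hx n).1, iSup_le fun n => (hx n).2⟩

lemma LocBdd.mono {w : Euc N → ℝ → ℝ} (hw : LocBdd N T w)
    (h : ∀ t : ℝ, 0 < t → ENNReal.ofReal t < T → ∀ᵐ x, |u x t| ≤ w x t) : LocBdd N T u := by
  intro τ hτ hτT
  obtain ⟨M, hM⟩ := hw τ hτ hτT
  refine ⟨M, fun t hτt htT => ?_⟩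
  have ht : 0 < t := hτ.trans_le hτt
  have ht_lt : ENNReal.ofReal t < T :=
    ((ENNReal.ofReal_lt_ofReal_iff (by linarith)).2 (by linarith)).trans_le htT
  filter_upwards [h t ht ht_lt, hM t hτt htT] with x hux hwx
  exact hux.trans ((le_abs_self _).trans hwx)

theorem isSolSC_toReal_of_isFixedPt (hp₁ : 0 ≤ p₁) (hp₂ : 0 ≤ p₂) (hq₁ : 0 ≤ q₁) (hq₂ : 0 ≤ q₂)
    {P : (Euc N × ℝ → ℝ≥0∞) × (Euc N × ℝ → ℝ≥0∞)}
    (hfix : Function.IsFixedPt (picardSC N p₁ p₂ q₁ q₂ (fun y => ENNReal.ofReal (u₀ y))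
      (fun y => ENNReal.ofReal (v₀ y))) P)
    (hmeas : Measurable P.1 ∧ Measurable P.2) (hreg : PairRegular N T u v)
    (hdom : AEDominated T P u v) :
    IsSolSC N p₁ p₂ q₁ q₂ u₀ v₀ T (fun x t => (P.1 (x, t)).toReal)
      (fun x t => (P.2 (x, t)).toReal) := by
  obtain ⟨hu, hv, -, -, hubdd, hvbdd⟩ := hreg
  have hle : ∀ t : ℝ, 0 < t → ENNReal.ofReal t < T → ∀ᵐ x,
      |(P.1 (x, t)).toReal| ≤ u x t ∧ |(P.2 (x, t)).toReal| ≤ v x t := fun t ht htT =>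
    (hdom t ht htT).mono fun x hx => by
      rw [abs_of_nonneg toReal_nonneg, abs_of_nonneg toReal_nonneg]
      exact ⟨ENNReal.toReal_le_of_le_ofReal (hu x t) hx.1,
        ENNReal.toReal_le_of_le_ofReal (hv x t) hx.2⟩
  refine ⟨⟨fun _ _ => toReal_nonneg, fun _ _ => toReal_nonneg, hmeas.1.ennreal_toReal,
    hmeas.2.ennreal_toReal, hubdd.mono fun t ht htT => (hle t ht htT).mono fun _ => And.left,
    hvbdd.mono fun t ht htT => (hle t ht htT).mono fun _ => And.right⟩, fun t ht htT => ?_⟩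
  have hfinite_t := hdom.ae_eq_ofReal_toReal t ht htT
  have hfinite_Ioo := fun s (hs : s ∈ Set.Ioo 0 t) => hdom.ae_eq_ofReal_toReal s hs.1
    ((ENNReal.ofReal_le_ofReal hs.2.le).trans_lt htT)
  constructor <;> filter_upwards [hfinite_t] with x hx
  · rw [← hx.1, ← duhamel_powerSource_of_ae_eq hp₁ hp₂ (fun _ _ => toReal_nonneg)
      (fun _ _ => toReal_nonneg) ht hfinite_Ioo]
    exact (congrFun (congrArg Prod.fst hfix) (x, t)).symm
  · rw [← hx.2, ← duhamel_powerSource_of_ae_eq hq₁ hq₂ (fun _ _ => toReal_nonneg)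
      (fun _ _ => toReal_nonneg) ht hfinite_Ioo]
    exact (congrFun (congrArg Prod.snd hfix) (x, t)).symm

theorem IsSuperSC.exists_isSolSC (h : IsSuperSC N p₁ p₂ q₁ q₂ u₀ v₀ T u v)
    (hp₁ : 0 ≤ p₁) (hp₂ : 0 ≤ p₂) (hq₁ : 0 ≤ q₁) (hq₂ : 0 ≤ q₂)
    (hu₀ : Measurable u₀) (hv₀ : Measurable v₀) :
    ∃ u' v' : Euc N → ℝ → ℝ, IsSolSC N p₁ p₂ q₁ q₂ u₀ v₀ T u' v' :=
  ⟨_, _, isSolSC_toReal_of_isFixedPt hp₁ hp₂ hq₁ hq₂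
    (isFixedPt_picardLimit hp₁ hp₂ hq₁ hq₂ hu₀.ennreal_ofReal hv₀.ennreal_ofReal)
    (measurable_picardLimit hu₀.ennreal_ofReal hv₀.ennreal_ofReal) h.1
    (h.aeDominated_picardLimit hp₁ hp₂ hq₁ hq₂)⟩

end Supersolution

section Positivity

variable {N : ℕ} {p₁ p₂ q₁ q₂ : ℝ} {u₀ v₀ : Euc N → ℝ} {T : ℝ≥0∞} {u v : Euc N → ℝ → ℝ}

lemma IsSolSC.ae_pos (h : IsSolSC N p₁ p₂ q₁ q₂ u₀ v₀ T u v) (hu₀ : Measurable u₀)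
    (hv₀ : Measurable v₀) (hu₀_ne : ¬ u₀ ≤ᵐ[volume] 0) (hv₀_ne : ¬ v₀ ≤ᵐ[volume] 0) {t : ℝ}
    (ht : 0 < t) (htT : ENNReal.ofReal t < T) : ∀ᵐ x, 0 < u x t ∧ 0 < v x t := by
  filter_upwards [(h.2 t ht htT).1, (h.2 t ht htT).2] with x hux hvx
  rw [← ENNReal.ofReal_pos, ← ENNReal.ofReal_pos, hux, hvx]
  exact ⟨(heatS_pos ht hu₀ hu₀_ne x).trans_le le_self_add,
    (heatS_pos ht hv₀ hv₀_ne x).trans_le le_self_add⟩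

end Positivity

section Supercaloric

variable {N : ℕ} {w : Euc N → ℝ → ℝ}

/-- A nonnegative supersolution of the heat equation on `[0,∞)` in the mild sense:
`S(t - s) w(s) ≤ w(t)` for `0 ≤ s < t`. -/
structure IsSupercaloric (w : Euc N → ℝ → ℝ) : Prop where
  nonneg : ∀ x t, 0 ≤ w x t
  measurable : Measurable (Function.uncurry w)
  heatS_le : ∀ {s t : ℝ}, 0 ≤ s → s < t → ∀ x,
    heatS N (t - s) (fun y => w y s) x ≤ ENNReal.ofReal (w x t)

lemma IsSupercaloric.rpow (hw : IsSupercaloric w) {θ : ℝ} (hθ : 0 ≤ θ) (hθ1 : θ ≤ 1) :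
    IsSupercaloric fun x t => w x t ^ θ where
  nonneg x t := Real.rpow_nonneg (hw.nonneg x t) θ
  measurable := hw.measurable.pow_const θ
  heatS_le {s t} hs hst x := by
    rw [← ENNReal.ofReal_rpow_of_nonneg (hw.nonneg x t) hθ]
    exact (heatS_rpow_le (sub_pos.2 hst) hθ hθ1 hw.measurable.of_uncurry_right
      (fun y => hw.nonneg y s) x).trans (ENNReal.rpow_le_rpow (hw.heatS_le hs hst x) hθ)

lemma IsSupercaloric.const_mul (hw : IsSupercaloric w) {c : ℝ} (hc : 0 ≤ c) :
    IsSupercaloric fun x t => c * w x t where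
  nonneg x t := mul_nonneg hc (hw.nonneg x t)
  measurable := hw.measurable.const_mul c
  heatS_le hs hst x := by
    rw [heatS_const_mul hc, ENNReal.ofReal_mul hc]
    gcongr
    exact hw.heatS_le hs hst x

-- Half of `w(t)` pays for the data, the other half for the source.
lemma IsSupercaloric.heatS_add_lintegral_le (hw : IsSupercaloric w) {h : Euc N → ℝ → ℝ}
    {k : ℝ → ℝ} (hk : ∀ s, 0 < s → 0 ≤ k s) (hk_int : ∫⁻ s in Set.Ioi 0, ENNReal.ofReal (k s) ≤ 2⁻¹)
    (hh : ∀ y s, 0 < s → h y s ≤ k s * w y s) {t : ℝ} (ht : 0 < t) (x : Euc N) :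
    heatS N t (fun y => 2⁻¹ * w y 0) x +
      ∫⁻ s in Set.Ioo 0 t, heatS N (t - s) (fun y => h y s) x ≤ ENNReal.ofReal (w x t) := by
  have hdata : heatS N t (fun y => 2⁻¹ * w y 0) x ≤ 2⁻¹ * ENNReal.ofReal (w x t) := by
    rw [heatS_const_mul (by positivity), ENNReal.ofReal_inv_of_pos zero_lt_two,
      ENNReal.ofReal_ofNat]
    gcongr
    simpa only [sub_zero] using hw.heatS_le le_rfl ht x
  have hslice : ∀ s ∈ Set.Ioo 0 t, heatS N (t - s) (fun y => h y s) x ≤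
      ENNReal.ofReal (k s) * ENNReal.ofReal (w x t) := fun s hs =>
    calc heatS N (t - s) (fun y => h y s) x
        ≤ heatS N (t - s) (fun y => k s * w y s) x :=
          heatS_mono (sub_pos.2 hs.2) (fun y => hh y s hs.1) x
      _ = ENNReal.ofReal (k s) * heatS N (t - s) (fun y => w y s) x :=
          heatS_const_mul (hk s hs.1) _ _ x
      _ ≤ ENNReal.ofReal (k s) * ENNReal.ofReal (w x t) := by
          gcongr
          exact hw.heatS_le hs.1.le hs.2 x
  have hsource : ∫⁻ s in Set.Ioo 0 t, heatS N (t - s) (fun y => h y s) x ≤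
      2⁻¹ * ENNReal.ofReal (w x t) :=
    calc ∫⁻ s in Set.Ioo 0 t, heatS N (t - s) (fun y => h y s) x
        ≤ ∫⁻ s in Set.Ioo 0 t, ENNReal.ofReal (k s) * ENNReal.ofReal (w x t) :=
          setLIntegral_mono' measurableSet_Ioo hslice
      _ ≤ ∫⁻ s in Set.Ioi 0, ENNReal.ofReal (k s) * ENNReal.ofReal (w x t) :=
          lintegral_mono_set Set.Ioo_subset_Ioi_self
      _ = (∫⁻ s in Set.Ioi 0, ENNReal.ofReal (k s)) * ENNReal.ofReal (w x t) :=
          lintegral_mul_const' _ _ ENNReal.ofReal_ne_top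
      _ ≤ 2⁻¹ * ENNReal.ofReal (w x t) := by gcongr
  calc _ ≤ 2⁻¹ * ENNReal.ofReal (w x t) + 2⁻¹ * ENNReal.ofReal (w x t) := add_le_add hdata hsource
    _ = ENNReal.ofReal (w x t) := by rw [← add_mul, ENNReal.inv_two_add_inv_two, one_mul]

lemma rpow_rpow_mul_rpow_rpow_le {ω m θ₁ θ₂ a b e θ : ℝ} (hω : 0 ≤ ω) (hωm : ω ≤ m) (hθ : 0 ≤ θ)
    (he : 0 ≤ e) (hadd : θ₁ * a + θ₂ * b = e + θ) (h₁ : 0 ≤ θ₁ * a) (h₂ : 0 ≤ θ₂ * b) :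
    (ω ^ θ₁) ^ a * (ω ^ θ₂) ^ b ≤ m ^ e * ω ^ θ := by
  rw [← Real.rpow_mul hω, ← Real.rpow_mul hω, ← Real.rpow_add_of_nonneg hω h₁ h₂, hadd,
    Real.rpow_add_of_nonneg hω he hθ]
  gcongr

lemma locBdd_of_le_antitoneOn {T : ℝ≥0∞} {m : ℝ → ℝ} (hw : ∀ x t, 0 ≤ w x t)
    (hm : AntitoneOn m (Set.Ioi 0)) (hwm : ∀ x t, 0 < t → w x t ≤ m t) : LocBdd N T w :=
  fun τ hτ _ => ⟨m τ, fun t hτt _ => ae_of_all _ fun x => by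
    rw [abs_of_nonneg (hw x t)]
    exact (hwm x t (hτ.trans_le hτt)).trans (hm hτ (hτ.trans_le hτt) hτt)⟩

theorem IsSupercaloric.isSuperSC_rpow (hw : IsSupercaloric w) {m : ℝ → ℝ}
    (hm : AntitoneOn m (Set.Ioi 0)) (hwm : ∀ x t, 0 < t → w x t ≤ m t)
    {p₁ p₂ q₁ q₂ θ₁ θ₂ e₁ e₂ : ℝ} (hp₁ : 0 ≤ p₁) (hp₂ : 0 ≤ p₂) (hq₁ : 0 ≤ q₁) (hq₂ : 0 ≤ q₂)
    (hθ₁ : θ₁ ∈ Set.Icc 0 1) (hθ₂ : θ₂ ∈ Set.Icc 0 1) (he₁ : 0 ≤ e₁) (he₂ : 0 ≤ e₂)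
    (hadd₁ : θ₁ * p₁ + θ₂ * p₂ = e₁ + θ₁) (hadd₂ : θ₁ * q₁ + θ₂ * q₂ = e₂ + θ₂)
    (hint₁ : ∫⁻ s in Set.Ioi 0, ENNReal.ofReal (m s ^ e₁) ≤ 2⁻¹)
    (hint₂ : ∫⁻ s in Set.Ioi 0, ENNReal.ofReal (m s ^ e₂) ≤ 2⁻¹) :
    IsSuperSC N p₁ p₂ q₁ q₂ (fun x => 2⁻¹ * w x 0 ^ θ₁) (fun x => 2⁻¹ * w x 0 ^ θ₂) ⊤
      (fun x t => w x t ^ θ₁) (fun x t => w x t ^ θ₂) := by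
  have hu := hw.rpow hθ₁.1 hθ₁.2
  have hv := hw.rpow hθ₂.1 hθ₂.2
  have hm0 : ∀ s, 0 < s → 0 ≤ m s := fun s hs => (hw.nonneg 0 s).trans (hwm 0 s hs)
  have hbdd : ∀ {θ : ℝ}, 0 ≤ θ → LocBdd N ⊤ fun x t => w x t ^ θ := fun {θ} hθ =>
    locBdd_of_le_antitoneOn (m := fun s => m s ^ θ)
      (fun x t => Real.rpow_nonneg (hw.nonneg x t) θ)
      (fun s hs t ht hst => Real.rpow_le_rpow (hm0 t ht) (hm hs ht hst) hθ)
      fun x t ht => Real.rpow_le_rpow (hw.nonneg x t) (hwm x t ht) hθ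
  refine ⟨⟨hu.nonneg, hv.nonneg, hu.measurable, hv.measurable, hbdd hθ₁.1, hbdd hθ₂.1⟩,
    fun t ht _ => ⟨ae_of_all _ ?_, ae_of_all _ ?_⟩⟩
  · exact hu.heatS_add_lintegral_le (fun s hs => Real.rpow_nonneg (hm0 s hs) e₁) hint₁
      (fun y s hs => rpow_rpow_mul_rpow_rpow_le (hw.nonneg y s) (hwm y s hs) hθ₁.1 he₁ hadd₁
        (mul_nonneg hθ₁.1 hp₁) (mul_nonneg hθ₂.1 hp₂)) ht
  · exact hv.heatS_add_lintegral_le (fun s hs => Real.rpow_nonneg (hm0 s hs) e₂) hint₂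
      (fun y s hs => rpow_rpow_mul_rpow_rpow_le (hw.nonneg y s) (hwm y s hs) hθ₂.1 he₂ hadd₂
        (mul_nonneg hθ₁.1 hq₁) (mul_nonneg hθ₂.1 hq₂)) ht

end Supercaloric

section ShiftedHeatKernel

variable {N : ℕ}

-- The absolute value only serves to make the function nonnegative at negative times.
lemma isSupercaloric_heatKernel_add {r : ℝ} (hr : 0 < r) :
    IsSupercaloric fun (x : Euc N) t => heatKernel N (r + |t|) x where
  nonneg x t := (heatKernel_pos (by positivity) x).le
  measurable := by unfold Function.uncurry; fun_prop
  heatS_le {s t} hs hst x := by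
    rw [heatS_heatKernel (by positivity) (sub_pos.2 hst), abs_of_nonneg hs,
      abs_of_nonneg (hs.trans hst.le), add_assoc, add_sub_cancel]

lemma antitoneOn_const_mul_add_rpow {δ r c : ℝ} (hδ : 0 ≤ δ) (hr : 0 ≤ r) (hc : c ≤ 0) :
    AntitoneOn (fun s : ℝ => δ * (r + s) ^ c) (Set.Ioi 0) := fun s hs t _ hst => by
  have hs : 0 < s := hs
  exact mul_le_mul_of_nonneg_left
    (Real.rpow_le_rpow_of_nonpos (by linarith) (by linarith) hc) hδ

lemma lintegral_add_rpow_lt_top {r c : ℝ} (hr : 0 < r) (hc : c < -1) :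
    ∫⁻ s in Set.Ioi 0, ENNReal.ofReal ((r + s) ^ c) < ⊤ := by
  have hint := integrableOn_add_rpow_Ioi_of_lt hc (c := 0) (m := r) (by linarith)
  simpa only [add_comm] using hint.lintegral_lt_top

lemma tendsto_lintegral_const_mul_add_rpow_rpow {r c e : ℝ} (hr : 0 < r) (he : 0 < e)
    (hce : c * e < -1) :
    Tendsto (fun δ : ℝ => ∫⁻ s in Set.Ioi 0, ENNReal.ofReal ((δ * (r + s) ^ c) ^ e))
      (nhdsWithin 0 (Set.Ioi 0)) (nhds 0) := by
  set C := ∫⁻ s in Set.Ioi 0, ENNReal.ofReal ((r + s) ^ (c * e))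
  have hC : C ≠ ⊤ := (lintegral_add_rpow_lt_top hr hce).ne
  have hscale : ∀ δ ∈ Set.Ioi (0 : ℝ), ENNReal.ofReal (δ ^ e) * C =
      ∫⁻ s in Set.Ioi 0, ENNReal.ofReal ((δ * (r + s) ^ c) ^ e) := fun δ hδ => by
    rw [← lintegral_const_mul' _ _ ENNReal.ofReal_ne_top]
    refine setLIntegral_congr_fun measurableSet_Ioi fun s hs => ?_
    have hrs : 0 < r + s := add_pos hr hs
    have hδ : 0 < δ := hδ
    rw [Real.mul_rpow hδ.le (by positivity), ← Real.rpow_mul hrs.le,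
      ENNReal.ofReal_mul (by positivity)]
  have hpow : Tendsto (fun δ : ℝ => ENNReal.ofReal (δ ^ e) * C) (nhds 0) (nhds 0) := by
    have hδ : Tendsto (fun δ : ℝ => ENNReal.ofReal (δ ^ e)) (nhds 0) (nhds 0) := by
      simpa only [Real.zero_rpow he.ne', ENNReal.ofReal_zero] using
        ENNReal.tendsto_ofReal (Real.continuousAt_rpow_const 0 e (Or.inr he.le)).tendsto
    simpa only [zero_mul] using ENNReal.Tendsto.mul_const hδ (Or.inr hC)
  exact (hpow.mono_left nhdsWithin_le_nhds).congr' (eventually_nhdsWithin_of_forall hscale)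

lemma exists_pos_lintegral_const_mul_add_rpow_rpow_le {r c e₁ e₂ : ℝ} (hr : 0 < r) (he₁ : 0 < e₁)
    (he₂ : 0 < e₂) (hce₁ : c * e₁ < -1) (hce₂ : c * e₂ < -1) {ε : ℝ≥0∞} (hε : 0 < ε) :
    ∃ δ : ℝ, 0 < δ ∧ (∫⁻ s in Set.Ioi 0, ENNReal.ofReal ((δ * (r + s) ^ c) ^ e₁) ≤ ε) ∧
      ∫⁻ s in Set.Ioi 0, ENNReal.ofReal ((δ * (r + s) ^ c) ^ e₂) ≤ ε :=
  (eventually_mem_nhdsWithin.and <|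
    ((tendsto_lintegral_const_mul_add_rpow_rpow hr he₁ hce₁).eventually_le_const hε).and
      ((tendsto_lintegral_const_mul_add_rpow_rpow hr he₂ hce₂).eventually_le_const hε)).exists

theorem exists_pos_isSuperSC_heatKernel_rpow (hN : 1 ≤ N) {p₁ p₂ q₁ q₂ θ₁ θ₂ e₁ e₂ r : ℝ}
    (hp₁ : 0 ≤ p₁) (hp₂ : 0 ≤ p₂) (hq₁ : 0 ≤ q₁) (hq₂ : 0 ≤ q₂) (hθ₁ : θ₁ ∈ Set.Icc 0 1)
    (hθ₂ : θ₂ ∈ Set.Icc 0 1) (he₁ : 2 / (N : ℝ) < e₁) (he₂ : 2 / (N : ℝ) < e₂)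
    (hadd₁ : θ₁ * p₁ + θ₂ * p₂ = e₁ + θ₁) (hadd₂ : θ₁ * q₁ + θ₂ * q₂ = e₂ + θ₂) (hr : 0 < r) :
    ∃ δ : ℝ, 0 < δ ∧ IsSuperSC N p₁ p₂ q₁ q₂
      (fun x => 2⁻¹ * (δ * heatKernel N r x) ^ θ₁) (fun x => 2⁻¹ * (δ * heatKernel N r x) ^ θ₂) ⊤
      (fun x t => (δ * heatKernel N (r + |t|) x) ^ θ₁)
      (fun x t => (δ * heatKernel N (r + |t|) x) ^ θ₂) := by
  have hN0 : (0 : ℝ) < N := by exact_mod_cast hN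
  have hpos : ∀ {e : ℝ}, 2 / (N : ℝ) < e → 0 < e := (by positivity : 0 < 2 / (N : ℝ)).trans
  have hdecay : ∀ {e : ℝ}, 2 / (N : ℝ) < e → -(N : ℝ) / 2 * e < -1 := fun he => by
    linarith [(div_lt_iff₀' hN0).1 he]
  obtain ⟨δ, hδ, hint₁, hint₂⟩ := exists_pos_lintegral_const_mul_add_rpow_rpow_le hr (hpos he₁)
    (hpos he₂) (hdecay he₁) (hdecay he₂) (ε := 2⁻¹) (by simp)
  have hsuper : IsSupercaloric fun (x : Euc N) t => δ * heatKernel N (r + |t|) x :=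
    (isSupercaloric_heatKernel_add hr).const_mul hδ.le
  have hbound : ∀ (x : Euc N) t, 0 < t →
      δ * heatKernel N (r + |t|) x ≤ δ * (r + t) ^ (-(N : ℝ) / 2) := fun x t ht => by
    rw [abs_of_pos ht]
    gcongr
    exact heatKernel_le_rpow (by positivity) x
  have hanti := antitoneOn_const_mul_add_rpow hδ.le hr.le (c := -(N : ℝ) / 2) (by linarith)
  refine ⟨δ, hδ, ?_⟩
  simpa only [abs_zero, add_zero] using hsuper.isSuperSC_rpow hanti hbound hp₁ hp₂ hq₁ hq₂ hθ₁ hθ₂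
    (hpos he₁).le (hpos he₂).le hadd₁ hadd₂ hint₁ hint₂

end ShiftedHeatKernel

/-- Theorem 4.2 (ii) for `Ω = ℝ^N`: if `1 + (p₁-1)/α + p₂/β > 1 + 2/N` and
`1 + q₁/α + (q₂-1)/β > 1 + 2/N` for some `α, β ≥ 1`, then for some nonnegative data, not both
identically zero, the strongly coupled system (SC) has a global-in-time positive solution. -/
theorem statement19 (N : ℕ) (hN : 1 ≤ N) (p₁ p₂ q₁ q₂ : ℝ)
    (hp₁ : 0 ≤ p₁) (hp₂ : 0 ≤ p₂) (hq₁ : 0 ≤ q₁) (hq₂ : 0 ≤ q₂)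
    (α β : ℝ) (hα : 1 ≤ α) (hβ : 1 ≤ β)
    (h1 : 1 + 2 / (N : ℝ) < 1 + (p₁ - 1) / α + p₂ / β)
    (h2 : 1 + 2 / (N : ℝ) < 1 + q₁ / α + (q₂ - 1) / β) :
    ∃ u₀ v₀ : Euc N → ℝ, Measurable u₀ ∧ Measurable v₀ ∧
      (∀ x, 0 ≤ u₀ x) ∧ (∀ x, 0 ≤ v₀ x) ∧
      ¬((∀ x, u₀ x = 0) ∧ (∀ x, v₀ x = 0)) ∧
      ∃ u v : Euc N → ℝ → ℝ, IsSolSC N p₁ p₂ q₁ q₂ u₀ v₀ ⊤ u v ∧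
        ∀ t : ℝ, 0 < t →
          ∀ᵐ x ∂(volume : Measure (Euc N)), 0 < u x t ∧ 0 < v x t := by
  obtain ⟨δ, hδ, hsuper⟩ := exists_pos_isSuperSC_heatKernel_rpow (θ₁ := α⁻¹) (θ₂ := β⁻¹)
    (e₁ := (p₁ - 1) / α + p₂ / β) (e₂ := q₁ / α + (q₂ - 1) / β) (r := 1) hN hp₁ hp₂ hq₁ hq₂
    ⟨by positivity, inv_le_one_of_one_le₀ hα⟩ ⟨by positivity, inv_le_one_of_one_le₀ hβ⟩
    (by linarith) (by linarith) (by ring) (by ring) one_pos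
  have hdata_meas : ∀ θ : ℝ, Measurable fun x : Euc N => 2⁻¹ * (δ * heatKernel N 1 x) ^ θ :=
    fun θ => by fun_prop
  have hdata_pos : ∀ (θ : ℝ) (x : Euc N), 0 < 2⁻¹ * (δ * heatKernel N 1 x) ^ θ := fun θ x => by
    have := heatKernel_pos one_pos x
    positivity
  have hdata_ne : ∀ θ : ℝ, ¬ (fun x : Euc N => 2⁻¹ * (δ * heatKernel N 1 x) ^ θ) ≤ᵐ[volume] 0 :=
    fun θ hle => let ⟨x, hx⟩ := hle.exists; (hdata_pos θ x).not_ge hx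
  obtain ⟨u, v, hsol⟩ := hsuper.exists_isSolSC hp₁ hp₂ hq₁ hq₂ (hdata_meas _) (hdata_meas _)
  exact ⟨_, _, hdata_meas _, hdata_meas _, fun x => (hdata_pos _ x).le, fun x => (hdata_pos _ x).le,
    fun h => (hdata_pos _ 0).ne' (h.1 0), u, v, hsol, fun t ht =>
    hsol.ae_pos (hdata_meas _) (hdata_meas _) (hdata_ne _) (hdata_ne _) ht ENNReal.ofReal_lt_top⟩
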